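/- Let k ≥ 0 and let ŝ = (p_1 r_1)···(p_q r_q) and ŝ' = (p'_1 r'_1)···(p'_{q'} r'_{q'}) be products of pairwise disjoint transpositions in S∞, where p_1 < p_2 < ... < p_q ≤ k, p'_1 < ... < p'_{q'} ≤ k, and all r_i and all r'_i lie in {k+1, k+2, ...}. If ŝ and ŝ' lie in the same left coset of the setwise stabilizer of {1, ..., k} (i.e., ŝ⁻¹·ŝ' maps {1, ..., k} onto itself), then q = q', {p_1, ..., p_q} = {p'_1, ..., p'_{q'}}, and {r_1, ..., r_q} = {r'_1, ..., r'_{q'}}. -/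

import Mathlib

/-!
A product `s` of disjoint transpositions `(p i, r i)` with every `p i` in `A` and every `r i`
outside `A` exchanges the `p i` for the `r i`, so the coset of `s` modulo the setwise stabilizer
of `A` determines `s(A) = (A \ {p i}) ∪ {r i}`. The two sets of endpoints are then read off as
`A \ s(A)` and `s(A) \ A`.
-/

section

variable {α : Type*}

theorem image_inv_mul_eq_self_iff (s t : Equiv.Perm α) (A : Set α) :
    ⇑(s⁻¹ * t) '' A = A ↔ s '' A = t '' A := by
  rw [Equiv.Perm.coe_mul, Set.image_comp, Equiv.Perm.inv_def, ← Equiv.eq_image_iff_symm_image_eq,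
    eq_comm]

variable [DecidableEq α] {A : Set α} {q : ℕ} {p r : Fin q → α}

theorem image_prod_ofFn_swap (hp : Function.Injective p) (hr : Function.Injective r)
    (hpA : ∀ i, p i ∈ A) (hrA : ∀ i, r i ∉ A) :
    (List.ofFn fun i => Equiv.swap (p i) (r i)).prod '' A = A \ Set.range p ∪ Set.range r := by
  induction q with
  | zero => simp
  | succ n ih =>
    set P := Set.range (Fin.tail p)
    set R := Set.range (Fin.tail r) with hR
    have image_tail :
        (List.ofFn fun i => Equiv.swap (Fin.tail p i) (Fin.tail r i)).prod '' A = A \ P ∪ R :=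
      ih (hp.comp (Fin.succ_injective n)) (hr.comp (Fin.succ_injective n))
        (fun i => hpA i.succ) (fun i => hrA i.succ)
    have p_zero_notMem_P : p 0 ∉ P := fun ⟨i, hi⟩ => Fin.succ_ne_zero i (hp hi)
    have r_zero_notMem_R : r 0 ∉ R := fun ⟨i, hi⟩ => Fin.succ_ne_zero i (hr hi)
    have p_zero_notMem : p 0 ∉ insert (r 0) R := by
      rw [hR, ← Fin.range_fin_succ]
      exact fun ⟨i, hi⟩ => hrA i (hi ▸ hpA 0)
    calc (List.ofFn fun i => Equiv.swap (p i) (r i)).prod '' A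
        = Equiv.swap (p 0) (r 0) '' (A \ P ∪ R) := by
          rw [List.ofFn_succ, List.prod_cons, Equiv.Perm.coe_mul, Set.image_comp, ← image_tail]
          rfl
      _ = insert (r 0) (A \ P ∪ R) \ {p 0} :=
          Equiv.image_swap_of_mem_of_notMem (Or.inl ⟨hpA 0, p_zero_notMem_P⟩)
            (not_or_intro (fun h => hrA 0 h.1) r_zero_notMem_R)
      _ = A \ insert (p 0) P ∪ insert (r 0) R := by grind
      _ = A \ Set.range p ∪ Set.range r := by rw [Fin.range_fin_succ p, Fin.range_fin_succ r]

theorem sdiff_image_prod_ofFn_swap (hp : Function.Injective p) (hr : Function.Injective r)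
    (hpA : ∀ i, p i ∈ A) (hrA : ∀ i, r i ∉ A) :
    A \ (List.ofFn fun i => Equiv.swap (p i) (r i)).prod '' A = Set.range p := by
  rw [image_prod_ofFn_swap hp hr hpA hrA]
  grind

theorem image_prod_ofFn_swap_sdiff (hp : Function.Injective p) (hr : Function.Injective r)
    (hpA : ∀ i, p i ∈ A) (hrA : ∀ i, r i ∉ A) :
    (List.ofFn fun i => Equiv.swap (p i) (r i)).prod '' A \ A = Set.range r := by
  rw [image_prod_ofFn_swap hp hr hpA hrA]
  grind

end

theorem eq_of_range_eq_of_injective {α : Type*} {m n : ℕ} {f : Fin m → α} {g : Fin n → α}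
    (hf : Function.Injective f) (hg : Function.Injective g) (h : Set.range f = Set.range g) :
    m = n := by
  simpa [Set.ncard_range_of_injective, hf, hg] using congrArg Set.ncard h

theorem stmt3_general {α : Type*} [DecidableEq α] {A : Set α} {q q' : ℕ}
    {p r : Fin q → α} {p' r' : Fin q' → α}
    (hp : Function.Injective p) (hp' : Function.Injective p')
    (hr : Function.Injective r) (hr' : Function.Injective r')
    (hpA : ∀ i, p i ∈ A) (hp'A : ∀ i, p' i ∈ A)
    (hrA : ∀ i, r i ∉ A) (hr'A : ∀ i, r' i ∉ A)
    (hcoset :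
      ⇑(((List.ofFn fun i => Equiv.swap (p i) (r i)).prod)⁻¹
          * (List.ofFn fun i => Equiv.swap (p' i) (r' i)).prod) '' A = A) :
    q = q' ∧ Set.range p = Set.range p' ∧ Set.range r = Set.range r' := by
  have image_eq := (image_inv_mul_eq_self_iff _ _ A).1 hcoset
  have range_p_eq : Set.range p = Set.range p' := by
    rw [← sdiff_image_prod_ofFn_swap hp hr hpA hrA, image_eq,
      sdiff_image_prod_ofFn_swap hp' hr' hp'A hr'A]
  have range_r_eq : Set.range r = Set.range r' := by
    rw [← image_prod_ofFn_swap_sdiff hp hr hpA hrA, image_eq,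
      image_prod_ofFn_swap_sdiff hp' hr' hp'A hr'A]
  exact ⟨eq_of_range_eq_of_injective hp hp' range_p_eq, range_p_eq, range_r_eq⟩

/-!
STATEMENT 3.
`S∞` is modeled as the finitely supported permutations of `ℕ` (0-based, so the set
`{1, ..., k}` of the paper becomes `{i | i < k}` and `{k+1, k+2, ...}` becomes `{i | k ≤ i}`).
If two products of pairwise disjoint transpositions `ŝ = ∏ (p i, r i)` and
`ŝ' = ∏ (p' i, r' i)`, with the `p`'s strictly increasing below `k` and the `r`'s in
`{i | k ≤ i}`, lie in the same left coset of the setwise stabilizer of `{i | i < k}`,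
then `q = q'`, the sets of `p`'s coincide and the sets of `r`'s coincide.
-/
theorem stmt3 (k q q' : ℕ) (p r : Fin q → ℕ) (p' r' : Fin q' → ℕ)
    (hp : StrictMono p) (hp' : StrictMono p')
    (hr : Function.Injective r) (hr' : Function.Injective r')
    (hpk : ∀ i, p i < k) (hp'k : ∀ i, p' i < k)
    (hrk : ∀ i, k ≤ r i) (hr'k : ∀ i, k ≤ r' i)
    (hcoset :
      ⇑(((List.ofFn fun i => Equiv.swap (p i) (r i)).prod)⁻¹
          * (List.ofFn fun i => Equiv.swap (p' i) (r' i)).prod) '' {i | i < k}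
        = {i | i < k}) :
    q = q' ∧ Set.range p = Set.range p' ∧ Set.range r = Set.range r' :=
  stmt3_general hp.injective hp'.injective hr hr' hpk hp'k
    (fun i => (hrk i).not_gt) (fun i => (hr'k i).not_gt) hcoset
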